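/- Let Λ be a numerical semigroup with enumeration λ, genus g and conductor c, suppose the greatest common divisor d of the elements of Λ smaller than c satisfies d > 1, and suppose Λ has at least two nonzero elements smaller than c (i.e., λ_2 < c). Then every element of Λ lying in the interval [c, c + d − 1] that is not a multiple of d is a strong generator of Λ. Consequently, Λ has at least d − 1 strong generators. -/

import Mathlib

/-!
Write `c` for the conductor and `λ₁ < λ₂ < c` for the first two nonzero elements. The elements of
`S` below `c` are multiples of `d`, so `d ≤ λ₁` and `λ₁ + d ≤ λ₂ < c`; in particular a nonzero
element of `S` is at least `d`, and an element of `S` exceeding `λ₁` is at least `λ₁ + d`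
(`add_le_of_enum_one_lt`). Let `x ∈ [c, c + d)` with `d ∤ x`.

* If `x = a + b` with `a, b` nonzero in `S`, they are not both below `c`, for otherwise `d ∣ x`;
  say `a ≥ c`. Then `b < d`, which is impossible.
* If `x + λ₁ = a + b` with `a, b` nonzero in `S \ {x}`, again they are not both below `c`,
  since `d ∣ λ₁`; say `a ≥ c`. Then
  `λ₁ ≤ b < λ₁ + d` forces `b = λ₁` and `a = x`, a contradiction.

Hence `x` is a strong generator. An interval of length `d` contains at most one multiple of `d`,
which gives `d - 1` such elements. Effective generators are less than `c + λ₁`, so the set of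
strong generators is finite and its `ncard` is its true cardinality.
-/

/-- A numerical semigroup: a subset of ℕ containing 0, closed under addition,
with finite complement. -/
def IsNumericalSemigroup (S : Set ℕ) : Prop :=
  0 ∈ S ∧ (∀ a ∈ S, ∀ b ∈ S, a + b ∈ S) ∧ Sᶜ.Finite

/-- The conductor: the smallest `c` such that every `n ≥ c` belongs to `S`. -/
noncomputable def nsConductor (S : Set ℕ) : ℕ :=
  sInf {c : ℕ | ∀ n : ℕ, c ≤ n → n ∈ S}

/-- The genus: the number of gaps. -/
noncomputable def nsGenus (S : Set ℕ) : ℕ := Sᶜ.ncard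

/-- The enumeration of `S`: the unique increasing bijection `ℕ → S`,
`λ_0 = 0 < λ_1 < λ_2 < ⋯`. -/
noncomputable def nsEnum (S : Set ℕ) : ℕ → ℕ := Nat.nth (· ∈ S)

/-- A generator: a nonzero element that is not a sum of two nonzero elements. -/
def IsGenerator (S : Set ℕ) (x : ℕ) : Prop :=
  x ∈ S ∧ x ≠ 0 ∧ ¬ ∃ a ∈ S, ∃ b ∈ S, a ≠ 0 ∧ b ≠ 0 ∧ a + b = x

/-- An ordinary numerical semigroup: `{0} ∪ [c, ∞)`. -/
def IsOrdinary (S : Set ℕ) : Prop := S = {0} ∪ Set.Ici (nsConductor S)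

/-- An effective generator: a generator that is ≥ the conductor. -/
def IsEffectiveGenerator (S : Set ℕ) (x : ℕ) : Prop :=
  IsGenerator S x ∧ nsConductor S ≤ x

/-- A strong generator: an effective generator `x` such that `x + λ₁` is a
generator of `S \ {x}`. -/
def IsStrongGenerator (S : Set ℕ) (x : ℕ) : Prop :=
  IsEffectiveGenerator S x ∧ IsGenerator (S \ {x}) (x + nsEnum S 1)

/-- The Frobenius number: the largest gap. -/
noncomputable def nsFrobenius (S : Set ℕ) : ℕ := sSup Sᶜ

/-- An infinite chain of numerical semigroups: `Λ_0 = ℕ` and each `Λ_i` is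
obtained from `Λ_{i+1}` by adjoining its Frobenius number. -/
def IsInfiniteChain (L : ℕ → Set ℕ) : Prop :=
  (∀ i, IsNumericalSemigroup (L i)) ∧ L 0 = Set.univ ∧
  ∀ i, L (i + 1) ≠ Set.univ ∧ L i = L (i + 1) ∪ {nsFrobenius (L (i + 1))}

/-- `T` is a descendant of `S`: `T ⊆ S` and they agree below the conductor of `S`. -/
def IsDescendant (S T : Set ℕ) : Prop :=
  IsNumericalSemigroup T ∧ T ⊆ S ∧
  T ∩ Set.Iio (nsConductor S) = S ∩ Set.Iio (nsConductor S)

theorem mem_of_nsConductor_le {S : Set ℕ} (hS : IsNumericalSemigroup S) {n : ℕ}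
    (hn : nsConductor S ≤ n) : n ∈ S := by
  have hne : {c : ℕ | ∀ n : ℕ, c ≤ n → n ∈ S}.Nonempty := by
    obtain ⟨M, hM⟩ := hS.2.2.bddAbove
    refine ⟨M + 1, fun n hn => ?_⟩
    by_contra h
    have := hM h
    omega
  exact Nat.sInf_mem hne n hn

theorem infinite_of_isNumericalSemigroup {S : Set ℕ} (hS : IsNumericalSemigroup S) :
    S.Infinite := by
  have h := hS.2.2.infinite_compl
  rwa [compl_compl] at h

theorem nsEnum_mem {S : Set ℕ} (hS : IsNumericalSemigroup S) (n : ℕ) : nsEnum S n ∈ S :=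
  Nat.nth_mem_of_infinite (p := (· ∈ S)) (infinite_of_isNumericalSemigroup hS) n

theorem nsEnum_strictMono {S : Set ℕ} (hS : IsNumericalSemigroup S) : StrictMono (nsEnum S) :=
  Nat.nth_strictMono (p := (· ∈ S)) (infinite_of_isNumericalSemigroup hS)

theorem nsEnum_one_le {S : Set ℕ} (hS : IsNumericalSemigroup S) {y : ℕ} (hy : y ∈ S)
    (h0 : y ≠ 0) : nsEnum S 1 ≤ y := by
  obtain ⟨n, rfl⟩ : ∃ n, nsEnum S n = y := by
    have hr := Nat.range_nth_of_infinite (p := (· ∈ S)) (infinite_of_isNumericalSemigroup hS)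
    have hy' : y ∈ Set.range (Nat.nth (· ∈ S)) := hr ▸ hy
    exact hy'
  refine (nsEnum_strictMono hS).monotone (Nat.one_le_iff_ne_zero.mpr ?_)
  rintro rfl
  exact h0 (Nat.nth_zero_of_zero (p := (· ∈ S)) hS.1)

theorem nsEnum_one_pos {S : Set ℕ} (hS : IsNumericalSemigroup S) : 0 < nsEnum S 1 :=
  (Nat.zero_le _).trans_lt (nsEnum_strictMono hS Nat.zero_lt_one)

/-- The element `λ₁` and the elements of `S` below the conductor are multiples of `d`, and those at
or above the conductor exceed `λ₂ ≥ λ₁ + d`. -/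
theorem add_le_of_enum_one_lt {S : Set ℕ} (hS : IsNumericalSemigroup S) {d : ℕ}
    (hdiv : ∀ x ∈ S, x < nsConductor S → d ∣ x) (h2 : nsEnum S 2 < nsConductor S) {y : ℕ}
    (hy : y ∈ S) (hlt : nsEnum S 1 < y) : nsEnum S 1 + d ≤ y := by
  have h12 : nsEnum S 1 < nsEnum S 2 := nsEnum_strictMono hS Nat.one_lt_two
  have h1 : d ∣ nsEnum S 1 := hdiv _ (nsEnum_mem hS 1) (h12.trans h2)
  have key : ∀ z ∈ S, z < nsConductor S → nsEnum S 1 < z → nsEnum S 1 + d ≤ z := by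
    intro z hz hzc hz1
    have := Nat.le_of_dvd (Nat.sub_pos_of_lt hz1) (Nat.dvd_sub (hdiv z hz hzc) h1)
    omega
  rcases lt_or_ge y (nsConductor S) with h | h
  · exact key y hy h hlt
  · exact ((key _ (nsEnum_mem hS 2) h2 h12).trans h2.le).trans h

theorem lt_of_isEffectiveGenerator {S : Set ℕ} (hS : IsNumericalSemigroup S)
    (hc : 0 < nsConductor S) {x : ℕ} (hx : IsEffectiveGenerator S x) :
    x < nsConductor S + nsEnum S 1 := by
  by_contra! h
  have hpos := nsEnum_one_pos hS
  exact hx.1.2.2 ⟨nsEnum S 1, nsEnum_mem hS 1, x - nsEnum S 1,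
    mem_of_nsConductor_le hS (by omega), by omega, by omega, by omega⟩

theorem isStrongGenerator_of_not_dvd {S : Set ℕ} (hS : IsNumericalSemigroup S) {d : ℕ}
    (hdiv : ∀ x ∈ S, x < nsConductor S → d ∣ x) (h2 : nsEnum S 2 < nsConductor S) {x : ℕ}
    (hx : x ∈ S) (hcx : nsConductor S ≤ x) (hxd : x < nsConductor S + d) (hnd : ¬ d ∣ x) :
    IsStrongGenerator S x := by
  have hpos := nsEnum_one_pos hS
  have h12 : nsEnum S 1 < nsEnum S 2 := nsEnum_strictMono hS Nat.one_lt_two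
  have hd1 : d ∣ nsEnum S 1 := hdiv _ (nsEnum_mem hS 1) (h12.trans h2)
  have hdle : d ≤ nsEnum S 1 := Nat.le_of_dvd hpos hd1
  refine ⟨⟨⟨hx, by omega, ?_⟩, hcx⟩, ⟨mem_of_nsConductor_le hS (by omega), ?_⟩, by omega, ?_⟩
  · rintro ⟨a, ha, b, hb, ha0, hb0, hab⟩
    have hac : a < nsConductor S := by
      have := nsEnum_one_le hS hb hb0
      omega
    have hbc : b < nsConductor S := by
      have := nsEnum_one_le hS ha ha0
      omega
    exact hnd (hab ▸ dvd_add (hdiv a ha hac) (hdiv b hb hbc))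
  · rw [Set.mem_singleton_iff]
    omega
  · rintro ⟨a, ⟨ha, hax⟩, b, ⟨hb, hbx⟩, ha0, hb0, hab⟩
    rw [Set.mem_singleton_iff] at hax hbx
    -- A nonzero element of `S` other than `λ₁` is at least `λ₁ + d`, so its complement
    -- in `x + λ₁` is at most `x - d < c`.
    have hac : a < nsConductor S := by
      have h1 := nsEnum_one_le hS hb hb0
      have h3 := add_le_of_enum_one_lt hS hdiv h2 hb (by omega)
      omega
    have hbc : b < nsConductor S := by
      have h1 := nsEnum_one_le hS ha ha0
      have h3 := add_le_of_enum_one_lt hS hdiv h2 ha (by omega)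
      omega
    exact hnd ((Nat.dvd_add_left hd1).mp (hab ▸ dvd_add (hdiv a ha hac) (hdiv b hb hbc)))

theorem le_card_filter_not_dvd (c d : ℕ) :
    d - 1 ≤ ((Finset.Ico c (c + d)).filter (fun x => ¬ d ∣ x)).card := by
  have hsum := Finset.card_filter_add_card_filter_not (s := Finset.Ico c (c + d)) (fun x => d ∣ x)
  have hone : ((Finset.Ico c (c + d)).filter (fun x => d ∣ x)).card ≤ 1 := by
    refine Finset.card_le_one.mpr fun a ha b hb => ?_
    simp only [Finset.mem_filter, Finset.mem_Ico] at ha hb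
    -- The difference of two multiples of `d` in the interval is a multiple of `d` less than `d`.
    have h1 := Nat.eq_zero_of_dvd_of_lt (Nat.dvd_sub ha.2 hb.2) (by omega)
    have h2 := Nat.eq_zero_of_dvd_of_lt (Nat.dvd_sub hb.2 ha.2) (by omega)
    omega
  rw [Nat.card_Ico] at hsum
  omega

/-- If the gcd `d` of the elements of `Λ` smaller than the
conductor `c` satisfies `d > 1` and there are at least two nonzero elements of
`Λ` smaller than `c` (i.e. `λ_2 < c`), then every element of `Λ` in
`[c, c + d - 1]` that is not a multiple of `d` is a strong generator;
consequently `Λ` has at least `d - 1` strong generators. -/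
theorem stmt_18 (S : Set ℕ) (hS : IsNumericalSemigroup S) (d : ℕ)
    (hdiv : ∀ x ∈ S, x < nsConductor S → d ∣ x)
    (hgcd : ∀ e : ℕ, (∀ x ∈ S, x < nsConductor S → e ∣ x) → e ∣ d)
    (hd1 : 1 < d) (h2 : nsEnum S 2 < nsConductor S) :
    (∀ x ∈ S, nsConductor S ≤ x → x < nsConductor S + d →
      ¬ d ∣ x → IsStrongGenerator S x) ∧
    d - 1 ≤ {x : ℕ | IsStrongGenerator S x}.ncard := by
  have hstrong : ∀ x ∈ S, nsConductor S ≤ x → x < nsConductor S + d →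
      ¬ d ∣ x → IsStrongGenerator S x := fun x hx hcx hxd hnd =>
    isStrongGenerator_of_not_dvd hS hdiv h2 hx hcx hxd hnd
  refine ⟨hstrong, (le_card_filter_not_dvd (nsConductor S) d).trans ?_⟩
  have hfin : {x : ℕ | IsStrongGenerator S x}.Finite :=
    (Set.finite_Iio (nsConductor S + nsEnum S 1)).subset fun x hx =>
      lt_of_isEffectiveGenerator hS (by omega) hx.1
  rw [← Set.ncard_coe_finset]
  refine Set.ncard_le_ncard (fun x hx => ?_) hfin
  simp only [Finset.coe_filter, Finset.mem_Ico, Set.mem_ofPred_eq] at hx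
  exact hstrong x (mem_of_nsConductor_le hS hx.1.1) hx.1.1 hx.1.2 hx.2
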